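/- For all integers k >= 0, j >= 0, m >= 1, r >= 1, setting n = 2m + kj, and for all rationals t_1, ..., t_m: \sum_{P \in P_{n,k,r}^{m,j}} \prod_{i=1}^{m} t_i^{\alpha_i(P)} = (1/(m+1)) * C(m+j, m) * C(m+j+1, r) * (r!/m!) * B_{m,r}(1!t_1, 2!t_2, ...). -/

import Mathlib

open Finset

inductive Step : Type
  | u | d | h
deriving DecidableEq

/-- Lengths of maximal blocks of letters with `wt s ≠ none`, weighted by `wt`. -/
def runs (wt : Step → Option ℕ) : List Step → List ℕ
  | [] => []
  | s :: l =>
    match wt s, runs wt l with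
    | none, r => r
    | some n, r =>
      match l with
      | [] => [n]
      | s' :: _ =>
        match wt s' with
        | none => n :: r
        | some _ =>
          match r with
          | a :: rest => (n + a) :: rest
          | [] => [n]

def uRuns : List Step → List ℕ :=
  runs (fun s => match s with | Step.u => some 1 | _ => none)

def uhRuns (k : ℕ) : List Step → List ℕ :=
  runs (fun s => match s with | Step.u => some 1 | Step.h => some k | Step.d => none)

def alpha (i : ℕ) (w : List Step) : ℕ := (uRuns w).count i

def beta (i : ℕ) (w : List Step) : ℕ := (uRuns w).tail.count i

def IsNonneg (w : List Step) : Prop :=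
  ∀ i : ℕ, (w.take i).count Step.d ≤ (w.take i).count Step.u

def pathSet (m j : ℕ) : Set (List Step) :=
  {w | w.count Step.u = m ∧ w.count Step.d = m ∧ w.count Step.h = j ∧ IsNonneg w}

/-- no horizontal step lies on the x-axis -/
def NoLowH (w : List Step) : Prop :=
  ∀ (i : ℕ) (hi : i < w.length), w[i]'hi = Step.h →
    (w.take i).count Step.u ≠ (w.take i).count Step.d

def qSet (m j : ℕ) : Set (List Step) :=
  {w | w ∈ pathSet m j ∧ NoLowH w}

/-- normalized partial Bell polynomial (r!/m!) B_{m,r}(1!t₁,2!t₂,…) -/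
def bellNorm (m r : ℕ) (t : ℕ → ℚ) : ℚ :=
  ∑ f : Fin m → Fin (m + 1),
    if (∑ i : Fin m, (f i : ℕ)) = r ∧ (∑ i : Fin m, ((i : ℕ) + 1) * (f i : ℕ)) = m then
      (r.factorial : ℚ) / (∏ i : Fin m, ((f i : ℕ).factorial : ℚ)) * ∏ i : Fin m, t ((i : ℕ) + 1) ^ (f i : ℕ)
    else 0

/-- normalized potential polynomial  P_p^{(lam)}(1!t₁,2!t₂,…)/p! -/
def potential (lam p : ℕ) (t : ℕ → ℚ) : ℚ :=
  ∑ r ∈ Finset.range (p + 1), (Nat.choose lam r : ℚ) * bellNorm p r t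

/-!
Every path is cut after each `d` and each `h` into blocks `u ^ a d` and `u ^ a h`. Let a `u`-segment
of length `a` weigh `τ a`, with `τ 0 = 1` for an empty one, let `h` weigh `z`, and measure time by
the number of letters `u` and `h`. Either kind of block changes the height by `i - 1`, where `i` is
the time it takes, so that, after a final `d` is appended, a path is a first passage of the walk
whose steps `i - 1` have the weights generated by `F = (∑ a, τ a * x ^ a) * (1 + z * x)`. The
hitting-time theorem evaluates the total weight of the paths from height `q` to `0` in time `n` as
`(q + 1) / (n + q + 1) * [x ^ n] F ^ (n + q + 1)`. It follows by induction from the decomposition by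
the first step `i - 1`; the factors `i` that appear are those of the derivative of a power of `F`.

For `q = 0` and `n = m + j`, extracting `z ^ j`, and then `y ^ r` after the substitution
`τ a = y * t a`, leaves
`1 / (m + j + 1) * C(m + j + 1, j) * C(m + j + 1, r) * [x ^ m] (∑ i ≥ 1, t i * x ^ i) ^ r`, and the
last factor is the normalized Bell polynomial.
-/

section GeneratingFunctions

open PowerSeries

variable {R : Type*} [CommSemiring R]

theorem coeff_X_mul_derivative (f : R⟦X⟧) (n : ℕ) :
    coeff n (X * derivative R f) = n * coeff n f := by
  cases n with
  | zero => simp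
  | succ n => rw [coeff_succ_X_mul, coeff_derivative, mul_comm, Nat.cast_succ]

theorem succ_mul_sum_antidiagonal_coeff_pow (F : R⟦X⟧) (m n : ℕ) :
    (n + 1) * ∑ p ∈ antidiagonal m, p.1 * (coeff p.1 F * coeff p.2 (F ^ n)) =
      m * coeff m (F ^ (n + 1)) := by
  calc (n + 1 : R) * ∑ p ∈ antidiagonal m, p.1 * (coeff p.1 F * coeff p.2 (F ^ n))
    _ = (n + 1 : ℕ) * coeff m (X * derivative R F * F ^ n) := by
        rw [coeff_mul]
        simp only [coeff_X_mul_derivative, mul_assoc, Nat.cast_succ]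
    _ = coeff m (X * derivative R (F ^ (n + 1))) := by
        rw [← nsmul_eq_mul, ← map_nsmul, derivative_pow, nsmul_eq_mul, Nat.add_sub_cancel]
        ring_nf
    _ = m * coeff m (F ^ (n + 1)) := coeff_X_mul_derivative _ _

/-- Kemperman's hitting-time formula: `H k m` is the total weight of the walks from height `k` with
steps `i - 1` of weight `coeff i F` that reach `0` for the first time when the `i` add up to `m`. -/
theorem natCast_add_mul_firstPassage_eq [IsAddTorsionFree R] {F : R⟦X⟧} {H : ℕ → ℕ → R}
    (hzero : ∀ m, H 0 m = if m = 0 then 1 else 0)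
    (hsucc : ∀ k m, H (k + 1) m = ∑ p ∈ antidiagonal m, coeff p.1 F * H (k + p.1) p.2) (k m : ℕ) :
    (m + k : ℕ) * H k m = k * coeff m (F ^ (m + k)) := by
  induction hn : m + k generalizing k m with
  | zero =>
    obtain ⟨rfl, rfl⟩ : m = 0 ∧ k = 0 := by lia
    simp
  | succ n ih =>
    rcases k with _ | k
    · simp [hzero, show m ≠ 0 by lia]
    obtain rfl : n = m + k := by lia
    rcases Nat.eq_zero_or_pos (m + k) with h0 | hpos
    · obtain ⟨rfl, rfl⟩ : m = 0 ∧ k = 0 := by lia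
      simp [hsucc, hzero]
    refine nsmul_right_injective hpos.ne' ?_
    have hfirst : (m + k : ℕ) * H (k + 1) m = k * coeff m (F ^ (m + k + 1)) +
        ∑ p ∈ antidiagonal m, p.1 * (coeff p.1 F * coeff p.2 (F ^ (m + k))) := by
      rw [hsucc, pow_succ', coeff_mul, mul_sum, mul_sum, ← sum_add_distrib]
      refine sum_congr rfl fun p hp ↦ ?_
      have hp := mem_antidiagonal.1 hp
      rw [mul_left_comm, ih _ _ (by lia)]
      push_cast
      ring
    calc (m + k) • (((m + k + 1 : ℕ) : R) * H (k + 1) m)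
      _ = (m + k + 1 : ℕ) * ((m + k : ℕ) * H (k + 1) m) := by rw [nsmul_eq_mul]; ring
      _ = (m + k + 1 : ℕ) * (k * coeff m (F ^ (m + k + 1))) + m * coeff m (F ^ (m + k + 1)) := by
        rw [hfirst, mul_add, Nat.cast_succ, succ_mul_sum_antidiagonal_coeff_pow]
      _ = (m + k) • (((k + 1 : ℕ) : R) * coeff m (F ^ (m + k + 1))) := by
        rw [nsmul_eq_mul]; push_cast; ring

theorem coeff_coeff_map_C_mul_one_add_C_X_mul_pow (S T : R⟦X⟧) (N n j : ℕ) :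
    (coeff n (map Polynomial.C S * (1 + C Polynomial.X * map Polynomial.C T) ^ N)).coeff j =
      N.choose j * coeff n (S * T ^ j) := by
  have hterm (i : ℕ) : (coeff n (map Polynomial.C S *
      ((C Polynomial.X * map Polynomial.C T) ^ i * (N.choose i : (Polynomial R)⟦X⟧)))).coeff j =
        if i = j then N.choose j * coeff n (S * T ^ j) else 0 := by
    have hi : map Polynomial.C S *
        ((C Polynomial.X * map Polynomial.C T) ^ i * (N.choose i : (Polynomial R)⟦X⟧)) =
          C ((N.choose i : Polynomial R) * Polynomial.X ^ i) * map Polynomial.C (S * T ^ i) := by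
      simp only [map_mul, map_pow, map_natCast]
      ring
    rw [hi, coeff_C_mul, coeff_map, mul_assoc, Polynomial.coeff_natCast_mul,
      mul_comm (Polynomial.X ^ i), Polynomial.coeff_C_mul_X_pow]
    grind
  rw [add_comm, add_pow, mul_sum, map_sum, Polynomial.finsetSum_coeff]
  simp only [one_pow, mul_one, hterm, sum_ite_eq', mem_range, ite_eq_left_iff, not_lt]
  intro h
  rw [Nat.choose_eq_zero_of_lt h, Nat.cast_zero, zero_mul]

theorem trunc_X_mul_mk (t : ℕ → R) (m : ℕ) :
    ((X * PowerSeries.mk fun i ↦ t (i + 1)).trunc (m + 1) : R⟦X⟧) =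
      ∑ i : Fin m, monomial (i + 1) (t (i + 1)) := by
  ext n
  rw [Fin.sum_univ_eq_sum_range fun i ↦ monomial (i + 1) (t (i + 1)), Polynomial.coeff_coe,
    coeff_trunc, map_sum]
  cases n <;> simp [coeff_succ_X_mul, coeff_monomial]

theorem prod_monomial_pow {ι : Type*} (s : Finset ι) (d f : ι → ℕ) (a : ι → R) :
    ∏ i ∈ s, monomial (d i) (a i) ^ f i =
      monomial (∑ i ∈ s, d i * f i) (∏ i ∈ s, a i ^ f i) := by
  induction s using Finset.cons_induction with
  | empty => simp [monomial_zero_eq_C]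
  | cons i s hi ih =>
    rw [prod_cons, prod_cons, sum_cons, ih, monomial_pow, monomial_mul_monomial, mul_comm (d i)]

theorem coeff_X_mul_mk_pow (t : ℕ → R) (m r : ℕ) :
    coeff m ((X * PowerSeries.mk fun i ↦ t (i + 1)) ^ r) =
      ∑ f ∈ piAntidiag (univ : Finset (Fin m)) r with ∑ i : Fin m, (i + 1 : ℕ) * f i = m,
        Nat.multinomial univ f * ∏ i : Fin m, t (i + 1) ^ f i := by
  rw [← coeff_coe_trunc_of_lt m.lt_succ_self, ← trunc_trunc_pow,
    coeff_coe_trunc_of_lt m.lt_succ_self, trunc_X_mul_mk, sum_pow_eq_sum_piAntidiag, map_sum,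
    sum_filter]
  refine sum_congr rfl fun f _ ↦ ?_
  rw [prod_monomial_pow, ← nsmul_eq_mul, map_nsmul, coeff_monomial, nsmul_eq_mul, mul_ite,
    mul_zero]
  simp only [eq_comm]

theorem le_of_sum_succ_mul_eq {m : ℕ} {f : Fin m → ℕ} (hf : ∑ i : Fin m, (i + 1 : ℕ) * f i = m)
    (i : Fin m) : f i ≤ m :=
  calc f i ≤ (i + 1) * f i := Nat.le_mul_of_pos_left _ i.val.succ_pos
    _ ≤ ∑ i : Fin m, (i + 1 : ℕ) * f i :=
      single_le_sum (f := fun i : Fin m ↦ (i + 1 : ℕ) * f i) (fun _ _ ↦ Nat.zero_le _) (mem_univ i)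
    _ = m := hf

theorem natCast_multinomial_eq_div {ι K : Type*} [Field K] [CharZero K] (s : Finset ι) (f : ι → ℕ) :
    (Nat.multinomial s f : K) = (∑ i ∈ s, f i).factorial / ∏ i ∈ s, ((f i).factorial : K) := by
  have h : ∏ i ∈ s, ((f i).factorial : K) ≠ 0 :=
    prod_ne_zero_iff.2 fun i _ ↦ Nat.cast_ne_zero.2 (f i).factorial_ne_zero
  rw [eq_div_iff h, mul_comm]
  exact_mod_cast Nat.multinomial_spec s f

theorem coeff_X_mul_mk_pow_eq_bellNorm (t : ℕ → ℚ) (m r : ℕ) :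
    coeff m ((X * PowerSeries.mk fun i ↦ t (i + 1)) ^ r) = bellNorm m r t := by
  rw [coeff_X_mul_mk_pow, bellNorm, ← sum_filter]
  symm
  refine sum_bij (fun f _ i ↦ (f i : ℕ)) (fun f hf ↦ ?_) (fun f _ g _ h ↦ ?_) (fun f hf ↦ ?_)
    fun f hf ↦ ?_
  · simpa using hf
  · exact funext fun i ↦ Fin.ext (congr_fun h i)
  · have hf : ∑ i, f i = r ∧ ∑ i : Fin m, (i + 1 : ℕ) * f i = m := by simpa using hf
    exact ⟨fun i ↦ ⟨f i, Nat.lt_succ_of_le (le_of_sum_succ_mul_eq hf.2 i)⟩, by simpa using hf, rfl⟩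
  · rw [natCast_multinomial_eq_div, (mem_filter.1 hf).2.1]

end GeneratingFunctions

section PolynomialWeights

open Polynomial

variable {R : Type*}

instance [Semiring R] [IsAddTorsionFree R] : IsAddTorsionFree R[X] where
  nsmul_right_injective n hn p q hpq := ext fun i ↦
    nsmul_right_injective hn (by simpa using congr_arg (coeff · i) hpq)

theorem prod_map_ite_zero_X_mul_C [CommSemiring R] {l : List ℕ} (hl : ∀ i ∈ l, 0 < i) (t : ℕ → R) :
    (l.map fun i ↦ if i = 0 then 1 else X * C (t i)).prod =
      C (l.map t).prod * X ^ l.length := by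
  induction l with
  | nil => simp
  | cons i l ih =>
    rw [List.forall_mem_cons] at hl
    rw [List.map_cons, List.prod_cons, ih hl.2, if_neg hl.1.ne', List.map_cons, List.prod_cons,
      List.length_cons, map_mul]
    ring

end PolynomialWeights

theorem add_one_mul_choose_add_add_one (m j : ℕ) :
    (m + 1) * (m + j + 1).choose j = (m + j + 1) * (m + j).choose m := by
  have hsymm : (m + j + 1).choose j = (m + j + 1).choose (m + 1) :=
    Nat.choose_symm_of_eq_add (by ring)
  rw [hsymm, mul_comm, Nat.add_one_mul_choose_eq]

section Runs

theorem uRuns_cons_of_ne {s : Step} (hs : s ≠ Step.u) (w : List Step) :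
    uRuns (s :: w) = uRuns w := by
  cases s <;> simp_all [uRuns, runs]

theorem uRuns_u_cons_of_ne {s : Step} (hs : s ≠ Step.u) (w : List Step) :
    uRuns (Step.u :: s :: w) = 1 :: uRuns w := by
  cases s <;> simp_all [uRuns, runs]

theorem uRuns_u_cons_u {w : List Step} {a : ℕ} {l : List ℕ} (h : uRuns (Step.u :: w) = a :: l) :
    uRuns (Step.u :: Step.u :: w) = (1 + a) :: l := by
  unfold uRuns at h ⊢
  rw [runs, h]

theorem uRuns_cons_u (w : List Step) : uRuns (Step.u :: w) = 1 :: uRuns w ∨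
    ∃ a l, uRuns w = a :: l ∧ uRuns (Step.u :: w) = (1 + a) :: l := by
  rcases w with _ | ⟨s, w⟩
  · exact .inl rfl
  by_cases hs : s = Step.u
  · subst hs
    cases h : uRuns (Step.u :: w) with
    | nil => left; unfold uRuns at h ⊢; rw [runs, h]
    | cons a l => exact .inr ⟨a, l, rfl, uRuns_u_cons_u h⟩
  · rw [uRuns_cons_of_ne hs]
    exact .inl (uRuns_u_cons_of_ne hs w)

theorem sum_uRuns (w : List Step) : (uRuns w).sum = w.count Step.u := by
  induction w with
  | nil => rfl
  | cons s w ih =>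
    by_cases hs : s = Step.u
    · subst hs
      rcases uRuns_cons_u w with h | ⟨a, l, hw, h⟩
      · rw [h, List.sum_cons, ih, List.count_cons_self, add_comm]
      · rw [h, List.count_cons_self, ← ih, hw, List.sum_cons, List.sum_cons]
        ring
    · rw [uRuns_cons_of_ne hs, List.count_cons_of_ne hs, ih]

theorem pos_of_mem_uRuns {w : List Step} : ∀ i ∈ uRuns w, 0 < i := by
  induction w with
  | nil => simp [uRuns, runs]
  | cons s w ih =>
    by_cases hs : s = Step.u
    · subst hs
      rcases uRuns_cons_u w with h | ⟨a, l, hw, h⟩ <;> simp_all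
    · rwa [uRuns_cons_of_ne hs]

theorem uRuns_replicate_succ (c : ℕ) : uRuns (List.replicate (c + 1) Step.u) = [c + 1] := by
  induction c with
  | zero => rfl
  | succ c ih => exact (uRuns_u_cons_u ih).trans (by rw [add_comm])

theorem uRuns_replicate_succ_append_cons {s : Step} (hs : s ≠ Step.u) (c : ℕ) (w : List Step) :
    uRuns (List.replicate (c + 1) Step.u ++ s :: w) = (c + 1) :: uRuns w := by
  induction c with
  | zero => exact uRuns_u_cons_of_ne hs w
  | succ c ih => exact (uRuns_u_cons_u ih).trans (by rw [add_comm])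

theorem prod_pow_alpha {M : Type*} [CommMonoid M] (t : ℕ → M) {m : ℕ} {w : List Step}
    (hw : w.count Step.u = m) :
    ∏ i ∈ Icc 1 m, t i ^ alpha i w = ((uRuns w).map t).prod := by
  rw [prod_list_map_count]
  refine (prod_subset (fun i hi ↦ ?_) fun i _ hi ↦ ?_).symm
  · rw [List.mem_toFinset] at hi
    have hle := List.le_sum_of_mem hi
    rw [sum_uRuns, hw] at hle
    exact mem_Icc.2 ⟨pos_of_mem_uRuns i hi, hle⟩
  · rw [List.mem_toFinset, ← List.count_eq_zero] at hi
    rw [alpha, hi, pow_zero]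

end Runs

section Paths

/-- The paths started at height `q` that never go below the axis; `q = 0` is `IsNonneg`. -/
def NonnegFrom (q : ℕ) (w : List Step) : Prop :=
  ∀ i : ℕ, (w.take i).count Step.d ≤ (w.take i).count Step.u + q

theorem nonnegFrom_nil (q : ℕ) : NonnegFrom q [] := by simp [NonnegFrom]

theorem nonnegFrom_cons {q : ℕ} {s : Step} {w : List Step} : NonnegFrom q (s :: w) ↔
    ∀ i : ℕ, (s :: w.take i).count Step.d ≤ (s :: w.take i).count Step.u + q := by
  rw [NonnegFrom, ← Nat.and_forall_add_one]
  simp only [List.take_zero, List.count_nil, zero_le, true_and, List.take_succ_cons]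

theorem nonnegFrom_cons_u {q : ℕ} {w : List Step} :
    NonnegFrom q (Step.u :: w) ↔ NonnegFrom (q + 1) w := by
  rw [nonnegFrom_cons]
  simp [NonnegFrom, Nat.add_assoc, Nat.add_comm 1]

theorem nonnegFrom_cons_h {q : ℕ} {w : List Step} :
    NonnegFrom q (Step.h :: w) ↔ NonnegFrom q w := by
  rw [nonnegFrom_cons]
  simp [NonnegFrom]

theorem nonnegFrom_succ_cons_d {q : ℕ} {w : List Step} :
    NonnegFrom (q + 1) (Step.d :: w) ↔ NonnegFrom q w := by
  rw [nonnegFrom_cons]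
  simp [NonnegFrom, ← Nat.add_assoc]

theorem not_nonnegFrom_zero_cons_d {w : List Step} : ¬ NonnegFrom 0 (Step.d :: w) :=
  fun h ↦ by simpa using h 1

/-- The paths from height `q` down to height `0` that never go below the axis. Letters `u` and `h`
take one unit of time each and letters `d` none, and `n` is the total time. -/
def pathsFrom : ℕ → ℕ → Finset (List Step)
  | 0, 0 => {[]}
  | q + 1, 0 => (pathsFrom q 0).image (List.cons Step.d)
  | 0, n + 1 => (pathsFrom 1 n).image (List.cons Step.u) ∪ (pathsFrom 0 n).image (List.cons Step.h)
  | q + 1, n + 1 => (pathsFrom (q + 2) n).image (List.cons Step.u) ∪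
      (pathsFrom q (n + 1)).image (List.cons Step.d) ∪
        (pathsFrom (q + 1) n).image (List.cons Step.h)
termination_by q n => (n, q)

theorem mem_pathsFrom {q n : ℕ} {w : List Step} : w ∈ pathsFrom q n ↔
    w.count Step.u + w.count Step.h = n ∧ w.count Step.d = w.count Step.u + q ∧ NonnegFrom q w := by
  induction q, n using pathsFrom.induct generalizing w with
  | _ =>
    rw [pathsFrom]
    rcases w with _ | ⟨_ | _ | _, w⟩ <;>
      simp [*, nonnegFrom_nil, nonnegFrom_cons_u, nonnegFrom_cons_h, nonnegFrom_succ_cons_d,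
        not_nonnegFrom_zero_cons_d] <;> lia

/-- The paths from height `q` down to height `0` with `m` letters `u` and `j` letters `h`. -/
def paths (q m j : ℕ) : Finset (List Step) :=
  {w ∈ pathsFrom q (m + j) | w.count Step.h = j}

theorem coe_paths_zero (m j : ℕ) : (paths 0 m j : Set (List Step)) = pathSet m j := by
  ext w
  simp only [paths, pathSet, coe_filter, Set.mem_ofPred_eq, mem_pathsFrom, NonnegFrom, IsNonneg,
    add_zero]
  lia

theorem sum_image_cons {α M : Type*} [DecidableEq α] [AddCommMonoid M] (a : α)
    (A : Finset (List α)) (f : List α → M) :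
    ∑ w ∈ A.image (List.cons a), f w = ∑ w ∈ A, f (a :: w) :=
  sum_image List.cons_injective.injOn

theorem disjoint_image_cons {α : Type*} [DecidableEq α] {a b : α} (h : a ≠ b)
    (A B : Finset (List α)) : Disjoint (A.image (List.cons a)) (B.image (List.cons b)) := by
  simp [Finset.disjoint_left, h.symm]

end Paths

section WordWeight

open PowerSeries (coeff C X)

variable {R : Type*} [CommSemiring R] {τ : ℕ → R} {z : R}

/-- The weight of a word in which a `u`-segment of length `i` weighs `τ i` and a letter `h` weighs
`z`. -/
def wordWeight (τ : ℕ → R) (z : R) (w : List Step) : R :=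
  z ^ w.count Step.h * ((uRuns w).map τ).prod

theorem wordWeight_replicate_u (hτ : τ 0 = 1) (c : ℕ) :
    wordWeight τ z (List.replicate c Step.u) = τ c := by
  rcases c with _ | c
  · simp [wordWeight, uRuns, runs, hτ]
  · simp [wordWeight, uRuns_replicate_succ, List.count_replicate]

theorem prod_map_uRuns_replicate_u_append_cons (hτ : τ 0 = 1) {s : Step} (hs : s ≠ Step.u) (c : ℕ)
    (w : List Step) :
    ((uRuns (List.replicate c Step.u ++ s :: w)).map τ).prod = τ c * ((uRuns w).map τ).prod := by
  rcases c with _ | c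
  · simp [uRuns_cons_of_ne hs, hτ]
  · simp [uRuns_replicate_succ_append_cons hs]

theorem wordWeight_replicate_u_append_d (hτ : τ 0 = 1) (c : ℕ) (w : List Step) :
    wordWeight τ z (List.replicate c Step.u ++ Step.d :: w) = τ c * wordWeight τ z w := by
  simp [wordWeight, prod_map_uRuns_replicate_u_append_cons hτ, List.count_replicate, mul_left_comm]

theorem wordWeight_replicate_u_append_h (hτ : τ 0 = 1) (c : ℕ) (w : List Step) :
    wordWeight τ z (List.replicate c Step.u ++ Step.h :: w) = τ c * (z * wordWeight τ z w) := by
  have hh : (List.replicate c Step.u ++ Step.h :: w).count Step.h = w.count Step.h + 1 := by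
    simp [List.count_replicate]
  rw [wordWeight, prod_map_uRuns_replicate_u_append_cons hτ (by decide), hh, wordWeight]
  ring

/-- The first-passage weights of the walk made of the blocks `u ^ a d` and `u ^ a h`. The height is
shifted by one: `k + 1` stands for the paths started at height `k`, and `0` for a finished path. -/
def pathSum (τ : ℕ → R) (z : R) : ℕ → ℕ → R
  | 0, n => if n = 0 then 1 else 0
  | k + 1, n => ∑ w ∈ pathsFrom k n, wordWeight τ z w

theorem sum_pathsFrom_zero_replicate_u_append (hτ : τ 0 = 1) (c q : ℕ) :
    ∑ w ∈ pathsFrom q 0, wordWeight τ z (List.replicate c Step.u ++ w) =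
      τ c * pathSum τ z q 0 := by
  rcases q with _ | q
  · simp [pathsFrom, wordWeight_replicate_u hτ, pathSum]
  · rw [pathsFrom, sum_image_cons, pathSum, mul_sum]
    simp only [wordWeight_replicate_u_append_d hτ]

theorem sum_pathsFrom_succ_replicate_u_append (hτ : τ 0 = 1) (c q n : ℕ) :
    ∑ w ∈ pathsFrom q (n + 1), wordWeight τ z (List.replicate c Step.u ++ w) =
      ∑ w ∈ pathsFrom (q + 1) n, wordWeight τ z (List.replicate (c + 1) Step.u ++ w) +
        τ c * (pathSum τ z q (n + 1) + z * pathSum τ z (q + 1) n) := by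
  have hu (w : List Step) : List.replicate c Step.u ++ Step.u :: w =
      List.replicate (c + 1) Step.u ++ w := by
    rw [List.replicate_succ', List.append_assoc, List.singleton_append]
  rcases q with _ | q
  · rw [pathsFrom, sum_union (disjoint_image_cons (by decide) _ _)]
    simp only [sum_image_cons, hu, wordWeight_replicate_u_append_h hτ, ← mul_sum, pathSum, zero_add,
      n.succ_ne_zero, if_false]
  · rw [pathsFrom, union_assoc, sum_union (disjoint_union_right.2
        ⟨disjoint_image_cons (by decide) _ _, disjoint_image_cons (by decide) _ _⟩),
        sum_union (disjoint_image_cons (by decide) _ _)]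
    simp only [sum_image_cons, hu, wordWeight_replicate_u_append_d hτ,
      wordWeight_replicate_u_append_h hτ, ← mul_sum, ← mul_add, pathSum]

/- The induction reads off the first `u`-segment letter by letter, `c` being the number of letters
already read; `c = 0` is the decomposition of a path by its first block. -/
theorem sum_pathsFrom_replicate_u_append (hτ : τ 0 = 1) (c q n : ℕ) :
    ∑ w ∈ pathsFrom q n, wordWeight τ z (List.replicate c Step.u ++ w) =
      ∑ p ∈ antidiagonal n, coeff p.1 (PowerSeries.mk (fun i ↦ τ (c + i)) * (1 + C z * X)) *
        pathSum τ z (q + p.1) p.2 := by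
  induction n generalizing c q with
  | zero => simp [sum_pathsFrom_zero_replicate_u_append hτ]
  | succ n ih =>
    have hshift : (PowerSeries.mk fun i ↦ τ (c + i)) =
        X * (PowerSeries.mk fun i ↦ τ (c + 1 + i)) + C (τ c) := by
      rw [PowerSeries.eq_X_mul_shift_add_const (PowerSeries.mk fun i ↦ τ (c + i))]
      simp [add_assoc, add_comm 1]
    have hcoeff (i : ℕ) : coeff (i + 1) (PowerSeries.mk (fun i ↦ τ (c + i)) * (1 + C z * X)) =
        coeff i (PowerSeries.mk (fun i ↦ τ (c + 1 + i)) * (1 + C z * X)) +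
          if i = 0 then τ c * z else 0 := by
      rw [hshift, add_mul, map_add, mul_assoc, PowerSeries.coeff_succ_X_mul,
        PowerSeries.coeff_C_mul]
      simp [PowerSeries.coeff_C]
    have hzero : ∑ p ∈ antidiagonal n,
        (if p.1 = 0 then τ c * z else 0) * pathSum τ z (q + (p.1 + 1)) p.2 =
          τ c * z * pathSum τ z (q + 1) n := by
      rw [sum_eq_single_of_mem (0, n) (by simp) fun p hp hne ↦ ?_]
      · simp
      · have hp0 : p.1 ≠ 0 := fun h0 ↦ hne (Prod.ext h0 (by simpa [h0] using hp))
        rw [if_neg hp0, zero_mul]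
    rw [sum_pathsFrom_succ_replicate_u_append hτ, ih, Finset.Nat.sum_antidiagonal_succ]
    have hconst : coeff 0 (PowerSeries.mk (fun i ↦ τ (c + i)) * (1 + C z * X)) = τ c := by simp
    simp only [hcoeff, hconst, add_mul, sum_add_distrib, hzero, add_zero, add_assoc, add_comm 1]
    ring

theorem mul_sum_pathsFrom_wordWeight [IsAddTorsionFree R] (hτ : τ 0 = 1) (q n : ℕ) :
    (n + q + 1 : ℕ) * ∑ w ∈ pathsFrom q n, wordWeight τ z w =
      (q + 1 : ℕ) * coeff n ((PowerSeries.mk τ * (1 + C z * X)) ^ (n + q + 1)) := by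
  refine natCast_add_mul_firstPassage_eq (H := pathSum τ z) (fun m ↦ rfl) (fun k m ↦ ?_) (q + 1) n
  simpa [pathSum] using sum_pathsFrom_replicate_u_append (z := z) hτ 0 k m

theorem mul_sum_paths_prod_uRuns [IsAddTorsionFree R] (hτ : τ 0 = 1) (q m j : ℕ) :
    (m + j + q + 1 : ℕ) * ∑ w ∈ paths q m j, ((uRuns w).map τ).prod =
      (q + 1 : ℕ) * ((m + j + q + 1).choose j *
        coeff m (PowerSeries.mk τ ^ (m + j + q + 1))) := by
  have hmk : PowerSeries.mk (fun i ↦ Polynomial.C (τ i)) =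
      PowerSeries.map Polynomial.C (PowerSeries.mk τ) := by ext1; simp
  have hcoeff (w : List Step) :
      (wordWeight (fun i ↦ Polynomial.C (τ i)) Polynomial.X w).coeff j =
        if w.count Step.h = j then ((uRuns w).map τ).prod else 0 := by
    rw [wordWeight, ← Function.comp_def, List.prod_map_hom, mul_comm,
      Polynomial.coeff_C_mul_X_pow]
    simp only [eq_comm]
  have h := congr_arg (Polynomial.coeff · j) (mul_sum_pathsFrom_wordWeight
    (τ := fun i ↦ Polynomial.C (τ i)) (z := Polynomial.X) (by simp [hτ]) q (m + j))
  simp only [Polynomial.coeff_natCast_mul, Polynomial.finsetSum_coeff, hcoeff] at h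
  rw [paths, sum_filter, h, hmk, mul_pow, ← map_pow, ← PowerSeries.map_X Polynomial.C,
    coeff_coeff_map_C_mul_one_add_C_X_mul_pow, PowerSeries.coeff_mul_X_pow]

theorem mul_sum_paths_filter_length [IsAddTorsionFree R] (t : ℕ → R) (q m j r : ℕ) :
    (m + j + q + 1 : ℕ) * ∑ w ∈ paths q m j with (uRuns w).length = r, ((uRuns w).map t).prod =
      (q + 1 : ℕ) * ((m + j + q + 1).choose j * ((m + j + q + 1).choose r *
        coeff m ((X * PowerSeries.mk fun i ↦ t (i + 1)) ^ r))) := by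
  set τ : ℕ → Polynomial R := fun i ↦ if i = 0 then 1 else Polynomial.X * Polynomial.C (t i)
  have hmk : PowerSeries.mk τ = 1 + C Polynomial.X *
      PowerSeries.map Polynomial.C (X * PowerSeries.mk fun i ↦ t (i + 1)) := by
    ext1 (_ | i)
    · simp [τ]
    · simp [τ, PowerSeries.coeff_succ_X_mul, PowerSeries.coeff_one]
  have hcoeff (w : List Step) : (((uRuns w).map τ).prod).coeff r =
        if (uRuns w).length = r then ((uRuns w).map t).prod else 0 := by
    rw [prod_map_ite_zero_X_mul_C pos_of_mem_uRuns, Polynomial.coeff_C_mul_X_pow]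
    simp only [eq_comm]
  have h := congr_arg (Polynomial.coeff · r) (mul_sum_paths_prod_uRuns (τ := τ) rfl q m j)
  simp only [Polynomial.coeff_natCast_mul, Polynomial.finsetSum_coeff, hcoeff] at h
  have hpow := coeff_coeff_map_C_mul_one_add_C_X_mul_pow 1
    (X * PowerSeries.mk fun i ↦ t (i + 1)) (m + j + q + 1) m r
  simp only [map_one, one_mul] at hpow
  rw [sum_filter, h, hmk, hpow]

end WordWeight

theorem stmt2 (k j m r : ℕ) (hm : 1 ≤ m) (hr : 1 ≤ r) (t : ℕ → ℚ) :
    (∑ᶠ w ∈ {w ∈ pathSet m j | (uRuns w).length = r},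
        ∏ i ∈ Finset.Icc 1 m, t i ^ alpha i w) =
      (1 : ℚ) / (m + 1) * Nat.choose (m + j) m * Nat.choose (m + j + 1) r *
        bellNorm m r t := by
  have hsum : ∑ᶠ w ∈ {w ∈ pathSet m j | (uRuns w).length = r}, ∏ i ∈ Icc 1 m, t i ^ alpha i w =
      ∑ w ∈ paths 0 m j with (uRuns w).length = r, ((uRuns w).map t).prod := by
    rw [← finsum_mem_coe_finset, coe_filter]
    simp only [← mem_coe, coe_paths_zero]
    exact finsum_mem_congr rfl fun w hw ↦ prod_pow_alpha t hw.1.1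
  have hpaths := mul_sum_paths_filter_length t 0 m j r
  have hchoose : (m + 1 : ℚ) * (m + j + 1).choose j = (m + j + 1) * (m + j).choose m := by
    exact_mod_cast add_one_mul_choose_add_add_one m j
  rw [coeff_X_mul_mk_pow_eq_bellNorm] at hpaths
  push_cast at hpaths
  rw [hsum, one_div_mul_eq_div, div_mul_eq_mul_div, div_mul_eq_mul_div, eq_div_iff (by positivity)]
  refine mul_left_cancel₀ (show (m + j + 1 : ℚ) ≠ 0 by positivity) ?_
  linear_combination (m + 1) * hpaths + (m + j + 1).choose r * bellNorm m r t * hchoose
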